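/- Let Δ ∈ 𝒟⁺, let U = {j_1,…,j_{k−1}} be any (k−1)-element subset of {1,…,N}, and let Re λ > 0. Then λ · ∫_Δ e^{−λ f_0(x)} (∏_{j=1}^N |f_j(x)|^{α_j}) · |det(f_0, l_{j_1},…,l_{j_{k−1}})| · (∏_{j∈U} f_j(x))^{−1} dx = Σ_{r ∉ U} sgn(l_r(e_U)) · α_r · I_{Δ, U∪{r}}(λ), where det(f_0, l_{j_1},…,l_{j_{k−1}}) is the determinant of the matrix whose rows are the linear forms f_0, l_{j_1},…,l_{j_{k−1}} in the standard coordinates, and the sum runs over all indices r ∈ {1,…,N} ∖ U. -/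

import Mathlib

open Set MeasureTheory Filter
open scoped Classical Real

noncomputable section

namespace HypArr

variable {k N : ℕ}

/-- The hyperplane `H j = f j ⁻¹ (0)` of the `j`-th affine form. -/
def Hyp (f : Fin N → ((Fin k → ℝ) →ᵃ[ℝ] ℝ)) (j : Fin N) : Set (Fin k → ℝ) :=
  {x | f j x = 0}

/-- The complement `ℝ^k ∖ (H 1 ∪ ⋯ ∪ H N)` of the union of all the hyperplanes. -/
def HypCompl (f : Fin N → ((Fin k → ℝ) →ᵃ[ℝ] ℝ)) : Set (Fin k → ℝ) :=
  {x | ∀ j, f j x ≠ 0}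

/-- `Δ` is an arrangement domain: a connected component of `ℝ^k ∖ (H 1 ∪ ⋯ ∪ H N)`. -/
def IsDomain (f : Fin N → ((Fin k → ℝ) →ᵃ[ℝ] ℝ)) (Δ : Set (Fin k → ℝ)) : Prop :=
  ∃ x ∈ HypCompl f, Δ = connectedComponentIn (HypCompl f) x

/-- The hyperplanes `H 1, …, H N` are in generic position in `ℝ^k`: they are pairwise
distinct, any `k` of them intersect in exactly one point, and any `k+1` of them have
empty intersection. -/
def Generic (f : Fin N → ((Fin k → ℝ) →ᵃ[ℝ] ℝ)) : Prop :=
  (∀ i j : Fin N, i ≠ j → Hyp f i ≠ Hyp f j) ∧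
  (∀ S : Finset (Fin N), S.card = k → ∃! x : Fin k → ℝ, ∀ j ∈ S, f j x = 0) ∧
  (∀ S : Finset (Fin N), S.card = k + 1 → ¬ ∃ x : Fin k → ℝ, ∀ j ∈ S, f j x = 0)

/-- `X` is a vertex of the arrangement. -/
def IsVertex (f : Fin N → ((Fin k → ℝ) →ᵃ[ℝ] ℝ)) (X : Fin k → ℝ) : Prop :=
  ∃ S : Finset (Fin N), S.card = k ∧ ∀ j ∈ S, f j X = 0

/-- `X` is the vertex of the arrangement with index set `S`. -/
def IsVertexOf (f : Fin N → ((Fin k → ℝ) →ᵃ[ℝ] ℝ)) (S : Finset (Fin N))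
    (X : Fin k → ℝ) : Prop :=
  S.card = k ∧ ∀ j ∈ S, f j X = 0

/-- The linear form `f0` is in general position with respect to the arrangement:
it takes pairwise distinct values at the vertices and is nonconstant on each
line `L_U = ∩_{j ∈ U} H j` for `U` of cardinality `k - 1`. -/
def GenericLin (f : Fin N → ((Fin k → ℝ) →ᵃ[ℝ] ℝ)) (f0 : (Fin k → ℝ) →ₗ[ℝ] ℝ) : Prop :=
  (∀ X Y : Fin k → ℝ, IsVertex f X → IsVertex f Y → X ≠ Y → f0 X ≠ f0 Y) ∧
  ∀ U : Finset (Fin N), U.card = k - 1 →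
    ∃ x y : Fin k → ℝ, (∀ j ∈ U, f j x = 0) ∧ (∀ j ∈ U, f j y = 0) ∧ f0 x ≠ f0 y

/-- `C` is a connected component of `ℝ^k ∖ ⋃_{j ∈ S} H j`. -/
def IsConeComp (f : Fin N → ((Fin k → ℝ) →ᵃ[ℝ] ℝ)) (S : Finset (Fin N))
    (C : Set (Fin k → ℝ)) : Prop :=
  ∃ y, (∀ j ∈ S, f j y ≠ 0) ∧ C = connectedComponentIn {z | ∀ j ∈ S, f j z ≠ 0} y

/-- `C` is the cone `C⁺_X` of the vertex `X` with index set `S`: the unique connected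
component of `ℝ^k ∖ ⋃_{j ∈ S} H j` on which `f0 - f0 X` is everywhere positive. -/
def IsPosCone (f : Fin N → ((Fin k → ℝ) →ᵃ[ℝ] ℝ)) (f0 : (Fin k → ℝ) →ₗ[ℝ] ℝ)
    (S : Finset (Fin N)) (X : Fin k → ℝ) (C : Set (Fin k → ℝ)) : Prop :=
  IsConeComp f S C ∧ ∀ y ∈ C, f0 X < f0 y

/-- `C` is the cone `C⁻_X` of the vertex `X` with index set `S`: the unique connected
component of `ℝ^k ∖ ⋃_{j ∈ S} H j` on which `f0 - f0 X` is everywhere negative. -/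
def IsNegCone (f : Fin N → ((Fin k → ℝ) →ᵃ[ℝ] ℝ)) (f0 : (Fin k → ℝ) →ₗ[ℝ] ℝ)
    (S : Finset (Fin N)) (X : Fin k → ℝ) (C : Set (Fin k → ℝ)) : Prop :=
  IsConeComp f S C ∧ ∀ y ∈ C, f0 y < f0 X

/-- `Δ` is the domain `Δ_X` of the vertex `X`: the unique arrangement domain whose
closure contains `X` and on which `f0 - f0 X > 0`. -/
def IsDomOf (f : Fin N → ((Fin k → ℝ) →ᵃ[ℝ] ℝ)) (f0 : (Fin k → ℝ) →ₗ[ℝ] ℝ)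
    (X : Fin k → ℝ) (Δ : Set (Fin k → ℝ)) : Prop :=
  IsDomain f Δ ∧ X ∈ closure Δ ∧ ∀ y ∈ Δ, f0 X < f0 y

/-- `Δ` is the domain `Δ⁻_X` of the vertex `X`: the unique arrangement domain whose
closure contains `X` and on which `f0 - f0 X < 0`. -/
def IsNegDomOf (f : Fin N → ((Fin k → ℝ) →ᵃ[ℝ] ℝ)) (f0 : (Fin k → ℝ) →ₗ[ℝ] ℝ)
    (X : Fin k → ℝ) (Δ : Set (Fin k → ℝ)) : Prop :=
  IsDomain f Δ ∧ X ∈ closure Δ ∧ ∀ y ∈ Δ, f0 y < f0 X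

/-- `Δ` belongs to `𝒟⁺`: it is an arrangement domain on which `f0` is bounded
from below. -/
def MemDplus (f : Fin N → ((Fin k → ℝ) →ᵃ[ℝ] ℝ)) (f0 : (Fin k → ℝ) →ₗ[ℝ] ℝ)
    (Δ : Set (Fin k → ℝ)) : Prop :=
  IsDomain f Δ ∧ BddBelow (f0 '' Δ)

/-- `Δ` belongs to `𝒟⁻`: it is an arrangement domain on which `f0` is bounded
from above. -/
def MemDminus (f : Fin N → ((Fin k → ℝ) →ᵃ[ℝ] ℝ)) (f0 : (Fin k → ℝ) →ₗ[ℝ] ℝ)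
    (Δ : Set (Fin k → ℝ)) : Prop :=
  IsDomain f Δ ∧ BddAbove (f0 '' Δ)

/-- The set `W` (a hyperplane) separates `S` from `T`: they lie in different connected
components of the complement of `W`. -/
def Separates {α : Type*} [TopologicalSpace α] (W S T : Set α) : Prop :=
  ∃ x ∈ S, ∃ y ∈ T, S ⊆ connectedComponentIn Wᶜ x ∧ T ⊆ connectedComponentIn Wᶜ y ∧
    connectedComponentIn Wᶜ x ≠ connectedComponentIn Wᶜ y

/-- The index set of `ℋ(Δ, Δ')`, the set of hyperplanes separating `Δ` from `Δ'`. -/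
def SepSet (f : Fin N → ((Fin k → ℝ) →ᵃ[ℝ] ℝ)) (Δ Δ' : Set (Fin k → ℝ)) :
    Finset (Fin N) :=
  Finset.univ.filter fun j => Separates (Hyp f j) Δ Δ'

/-!
Differentiate the integrand `G = e^{-λ f₀} ∏ |f j|^{α j} / ∏_{j ∈ U} f j` of the left-hand side in
the direction `e_U`, along which `f j` is constant for `j ∈ U`: the derivative is
`-λ G + ∑_{r ∉ U} α r · l r (e_U) · G / f r`. On a line parallel to `e_U` the function `G` is
continuous and vanishes where the line leaves `Δ`, so the extension by zero of the derivative has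
integral `0` over `ℝ^k` by the fundamental theorem of calculus and translation invariance. The
determinants enter through `|det (l r, l U)| = |l r (e_U)| · |det (f₀, l U)|`.

For the integrability, an arrangement domain is a polyhedron, and `f₀` is positive on the nonzero
directions of its recession cone, so `f₀` grows linearly on `Δ`. Since the forms `f j`,
`j ∈ U ∪ {r}`, are affine coordinates, the integrand is then dominated by a product of
one-dimensional functions `|y|^β e^{-δ |y|}` with `β > -1`.
-/

section LineDerivative

variable {E F : Type*} [NormedAddCommGroup E] [NormedSpace ℝ E]
  [NormedAddCommGroup F] [NormedSpace ℝ F] {G : E → F} {g' : F} {s : Set E} {x e : E}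

lemma hasDerivAt_comp_add_smul {t : ℝ} (h : HasLineDerivAt ℝ G g' (x + t • e) e) :
    HasDerivAt (fun s : ℝ => G (x + s • e)) g' t := by
  have h' : HasDerivAt (fun s : ℝ => G (x + t • e + s • e)) g' (t - t) := by
    rw [sub_self]
    exact h
  simpa only [add_assoc, ← add_smul, add_sub_cancel] using h'.comp_sub_const t t

lemma hasLineDerivAt_indicator (h : HasLineDerivAt ℝ G g' x e) (hx : x ∉ frontier s) :
    HasLineDerivAt ℝ (s.indicator G) (s.indicator (fun _ => g') x) x e := by
  by_cases hxs : x ∈ s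
  · rw [indicator_of_mem hxs]
    have hs : s ∈ nhds x := mem_interior_iff_mem_nhds.1 <| by_contra fun hi =>
      hx ⟨subset_closure hxs, hi⟩
    refine h.congr_of_eventuallyEq ?_
    filter_upwards [hs] with y hy using indicator_of_mem hy G
  · rw [indicator_of_notMem hxs]
    have hs : sᶜ ∈ nhds x := mem_interior_iff_mem_nhds.1 <| by_contra fun hi =>
      hx (by rw [← frontier_compl]; exact ⟨subset_closure hxs, hi⟩)
    have hzero : HasLineDerivAt ℝ (fun _ : E => (0 : F)) 0 x e := hasDerivAt_const _ _
    refine hzero.congr_of_eventuallyEq ?_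
    filter_upwards [hs] with y hy using indicator_of_notMem hy G

/-- The fundamental theorem of calculus on the segments `[x, x + e]`, integrated over `x`. -/
theorem integral_eq_zero_of_hasLineDerivAt [MeasurableSpace E] [BorelSpace E]
    [SecondCountableTopology E] [CompleteSpace F] {μ : Measure E} [SFinite μ]
    [μ.IsAddRightInvariant] {D : E → F} (hG : Integrable G μ) (hD : Integrable D μ)
    (hcont : ∀ x, Continuous fun t : ℝ => G (x + t • e))
    (hderiv : ∀ x, ∃ S : Set ℝ, S.Countable ∧
      ∀ t ∉ S, HasLineDerivAt ℝ G (D (x + t • e)) (x + t • e) e) :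
    ∫ x, D x ∂μ = 0 := by
  have hshear : MeasurePreserving (fun p : ℝ × E => (p.1, p.2 + p.1 • e))
      ((volume.restrict (Ioc 0 1)).prod μ) ((volume.restrict (Ioc 0 1)).prod μ) :=
    (MeasurePreserving.id _).skew_product (g := fun t x => x + t • e) (by fun_prop)
      (.of_forall fun t => (measurePreserving_add_right μ (t • e)).map_eq)
  have hDshear : Integrable (fun p : ℝ × E => D (p.2 + p.1 • e))
      ((volume.restrict (Ioc 0 1)).prod μ) :=
    hshear.integrable_comp_of_integrable (hD.comp_snd _)
  have hftc : ∀ᵐ x ∂μ, G (x + (1 : ℝ) • e) - G x = ∫ t in Ioc (0 : ℝ) 1, D (x + t • e) := by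
    filter_upwards [hDshear.prod_left_ae] with x hx
    obtain ⟨S, hS, hS'⟩ := hderiv x
    rw [← intervalIntegral.integral_of_le zero_le_one,
      integral_eq_of_hasDerivAt_off_countable_of_le (fun t : ℝ => G (x + t • e)) _ zero_le_one hS
        (hcont x).continuousOn (fun t ht => hasDerivAt_comp_add_smul (hS' t ht.2))
        ((intervalIntegrable_iff_integrableOn_Ioc_of_le zero_le_one).2 hx), zero_smul, add_zero]
  have hswap := (integral_integral_swap (f := fun t x => D (x + t • e)) hDshear).symm
  rw [← integral_congr_ae hftc, integral_sub (hG.comp_add_right _) hG,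
    integral_add_right_eq_self, sub_self] at hswap
  simpa [integral_add_right_eq_self] using hswap.symm

end LineDerivative

section AffineMap

lemma affineMap_add {R E F : Type*} [Ring R] [AddCommGroup E] [Module R E] [AddCommGroup F]
    [Module R F] (φ : E →ᵃ[R] F) (x v : E) :
    φ (x + v) = φ x + φ.linear v := by
  simpa only [vadd_eq_add, add_comm] using φ.map_vadd x v

variable {E ι : Type*} [AddCommGroup E] [Module ℝ E] {f : ι → E →ᵃ[ℝ] ℝ} {U : Finset ι} {e : E}

lemma prod_add_smul_of_linear_eq_zero (he : ∀ i ∈ U, (f i).linear e = 0) (x : E) (t : ℝ) :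
    ∏ j ∈ U, f j (x + t • e) = ∏ j ∈ U, f j x :=
  Finset.prod_congr rfl fun j hj => by
    rw [affineMap_add, map_smul, he j hj, smul_zero, add_zero]

lemma eq_zero_of_existsUnique_zero (hzero : ∃! x, ∀ j ∈ U, f j x = 0)
    (he : ∀ j ∈ U, (f j).linear e = 0) : e = 0 := by
  obtain ⟨x, hx, huniq⟩ := hzero
  exact add_eq_left.1 (huniq (x + e) fun j hj => by rw [affineMap_add, hx j hj, he j hj, add_zero])

lemma countable_or_exists_forall_eq_zero [Finite ι] (f : ι → E →ᵃ[ℝ] ℝ) (x e : E) :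
    {t : ℝ | ∃ j, f j (x + t • e) = 0}.Countable ∨ ∃ j, ∀ t : ℝ, f j (x + t • e) = 0 := by
  have haff (j : ι) (t : ℝ) : f j (x + t • e) = f j x + t * (f j).linear e := by
    rw [affineMap_add, map_smul, smul_eq_mul]
  by_cases h : ∃ j, (f j).linear e = 0 ∧ f j x = 0
  · obtain ⟨j, hj, hjx⟩ := h
    exact .inr ⟨j, fun t => by rw [haff, hj, hjx, mul_zero, add_zero]⟩
  · left
    rw [ofPred_exists]
    refine countable_iUnion fun j => Subsingleton.countable fun t ht s hs => ?_
    simp only [mem_ofPred_eq, haff] at ht hs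
    have hne : (f j).linear e ≠ 0 := fun hj => h ⟨j, hj, by simpa [hj] using ht⟩
    exact mul_right_cancel₀ hne (by linarith)

end AffineMap

section OpenPolyhedron

variable {E ι : Type*} [AddCommGroup E] [Module ℝ E]

/-- The open polyhedron cut out by the strict inequalities `0 < g j`. -/
def openPolyhedron (g : ι → E →ᵃ[ℝ] ℝ) : Set E :=
  {x | ∀ j, 0 < g j x}

lemma convex_openPolyhedron (g : ι → E →ᵃ[ℝ] ℝ) : Convex ℝ (openPolyhedron g) := by
  have : openPolyhedron g = ⋂ j, g j ⁻¹' Ioi 0 := by ext; simp [openPolyhedron]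
  exact this ▸ convex_iInter fun j => (convex_Ioi 0).affine_preimage (g j)

lemma nonneg_of_bddBelow_openPolyhedron {g : ι → E →ᵃ[ℝ] ℝ} {l : E →ₗ[ℝ] ℝ}
    (hne : (openPolyhedron g).Nonempty) (hl : BddBelow (l '' openPolyhedron g)) {v : E}
    (hv : ∀ j, 0 ≤ (g j).linear v) : 0 ≤ l v := by
  obtain ⟨p, hp⟩ := hne
  obtain ⟨m, hm⟩ := hl
  by_contra! hneg
  obtain ⟨n, hn⟩ := exists_nat_gt ((l p - m) / -l v)
  rw [div_lt_iff₀ (neg_pos.2 hneg)] at hn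
  have hray : p + (n : ℝ) • v ∈ openPolyhedron g := fun j => by
    rw [affineMap_add, map_smul, smul_eq_mul]
    exact add_pos_of_pos_of_nonneg (hp j) (mul_nonneg n.cast_nonneg (hv j))
  have hbound := hm ⟨_, hray, rfl⟩
  rw [map_add, map_smul, smul_eq_mul] at hbound
  linarith

/-- The vectors `v ± ε • w` stay in the cone for small `ε`, since `w` is tangent to every facet
through `v`. -/
lemma pos_of_nonneg_on_cone [Finite ι] {m : ι → E →ₗ[ℝ] ℝ} {l : E →ₗ[ℝ] ℝ}
    (hl : ∀ v, (∀ j, 0 ≤ m j v) → 0 ≤ l v) {v w : E} (hv : ∀ j, 0 ≤ m j v)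
    (hw : ∀ j, m j v = 0 → m j w = 0) (hlw : l w ≠ 0) : 0 < l v := by
  have hsmall : ∀ᶠ ε : ℝ in nhdsWithin 0 (Ioi 0), ∀ j, ε * |m j w| ≤ m j v := by
    refine eventually_all.2 fun j => ?_
    rcases (hv j).eq_or_lt with hj | hj
    · exact .of_forall fun ε => by simp [hw j hj.symm, ← hj]
    · have hlim : Tendsto (fun ε : ℝ => ε * |m j w|) (nhds 0) (nhds 0) :=
        (continuous_mul_const |m j w|).tendsto' 0 0 (zero_mul _)
      exact ((hlim.eventually_lt_const hj).filter_mono nhdsWithin_le_nhds).mono fun _ => le_of_lt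
  obtain ⟨ε, hε, hε0⟩ := (hsmall.and self_mem_nhdsWithin).exists
  have hshift (σ : ℝ) (hσ : |σ| = ε) : 0 ≤ l v + σ * l w := by
    rw [← smul_eq_mul, ← map_smul, ← map_add]
    refine hl _ fun j => ?_
    have := neg_abs_le (σ * m j w)
    rw [abs_mul, hσ] at this
    rw [map_add, map_smul, smul_eq_mul]
    linarith [hε j]
  have hplus := hshift ε (abs_of_pos hε0)
  have hminus := hshift (-ε) (by rw [abs_neg, abs_of_pos hε0])
  rcases hlw.lt_or_gt with h | h
  · linarith [mul_neg_of_pos_of_neg hε0 h]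
  · linarith [mul_pos hε0 h]

end OpenPolyhedron

section Topology

variable {E ι : Type*} [NormedAddCommGroup E] [NormedSpace ℝ E] [FiniteDimensional ℝ E]

lemma isOpen_openPolyhedron [Finite ι] (g : ι → E →ᵃ[ℝ] ℝ) : IsOpen (openPolyhedron g) := by
  have : openPolyhedron g = ⋂ j, g j ⁻¹' Ioi 0 := by ext; simp [openPolyhedron]
  exact this ▸ isOpen_iInter_of_finite fun j =>
    isOpen_Ioi.preimage (g j).continuous_of_finiteDimensional

lemma exists_eq_zero_of_mem_frontier_openPolyhedron [Finite ι] {g : ι → E →ᵃ[ℝ] ℝ} {x : E}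
    (hx : x ∈ frontier (openPolyhedron g)) : ∃ j, g j x = 0 := by
  rw [(isOpen_openPolyhedron g).frontier_eq] at hx
  have hnonneg (j) : 0 ≤ g j x :=
    closure_minimal (fun y hy => (hy j).le)
      (isClosed_Ici.preimage (g j).continuous_of_finiteDimensional) hx.1
  by_contra! hne
  exact hx.2 fun j => (hnonneg j).lt_of_ne' (hne j)

/-- Multiplying each `f j` by its value at `p` makes all the forms positive at `p`. -/
lemma connectedComponentIn_compl_hyperplanes {f : ι → E →ᵃ[ℝ] ℝ} {p : E} (hp : ∀ j, f j p ≠ 0) :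
    connectedComponentIn {x | ∀ j, f j x ≠ 0} p = openPolyhedron fun j => f j p • f j := by
  refine Subset.antisymm (fun x hx j => ?_) ?_
  · change 0 < f j p * f j x
    by_contra! hle
    have hord : (f j '' connectedComponentIn {x | ∀ j, f j x ≠ 0} p).OrdConnected :=
      (isPreconnected_connectedComponentIn.image _
        (f j).continuous_of_finiteDimensional.continuousOn).ordConnected
    have hzero : (0 : ℝ) ∈ uIcc (f j p) (f j x) := by
      rw [mem_uIcc]
      rcases mul_nonpos_iff.1 hle with h | h
      exacts [.inr h.symm, .inl h]
    obtain ⟨y, hy, hy0⟩ := hord.uIcc_subset ⟨p, mem_connectedComponentIn hp, rfl⟩ ⟨x, hx, rfl⟩ hzero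
    exact connectedComponentIn_subset _ _ hy j hy0
  · exact (convex_openPolyhedron _).isPreconnected.subset_connectedComponentIn
      (fun j => mul_self_pos.2 (hp j)) fun x hx j hj => (hx j).ne' (by simp [hj])

lemma exists_pos_mul_norm_le_of_pos_homogeneous {φ : E → ℝ} (hφ : Continuous φ)
    (hhom : ∀ t : ℝ, 0 ≤ t → ∀ v, φ (t • v) = t * φ v) (hpos : ∀ v ≠ 0, 0 < φ v) :
    ∃ c > 0, ∀ x, c * ‖x‖ ≤ φ x := by
  have hzero : φ 0 = 0 := by simpa using hhom 0 le_rfl 0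
  rcases subsingleton_or_nontrivial E with _ | _
  · exact ⟨1, one_pos, fun x => by simp [Subsingleton.elim x 0, hzero]⟩
  obtain ⟨v, hv, hmin⟩ := (isCompact_sphere (0 : E) 1).exists_isMinOn
    (NormedSpace.sphere_nonempty.2 zero_le_one) hφ.continuousOn
  refine ⟨φ v, hpos v (ne_zero_of_mem_unit_sphere ⟨v, hv⟩), fun x => ?_⟩
  rcases eq_or_ne x 0 with rfl | hx
  · simp [hzero]
  · have hx' : 0 < ‖x‖ := norm_pos_iff.2 hx
    have hle : φ v ≤ φ (‖x‖⁻¹ • x) := hmin (by simp [norm_smul, hx'.ne'])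
    rwa [hhom _ (by positivity), ← div_eq_inv_mul, le_div_iff₀ hx'] at hle

lemma exists_norm_growth_openPolyhedron [Finite ι] {g : ι → E →ᵃ[ℝ] ℝ} {l : E →ₗ[ℝ] ℝ}
    (hl : BddBelow (l '' openPolyhedron g))
    (hpos : ∀ v ≠ 0, (∀ j, 0 ≤ (g j).linear v) → 0 < l v) :
    ∃ c > 0, ∃ C, ∀ x ∈ openPolyhedron g, c * ‖x‖ - C ≤ l x := by
  cases nonempty_fintype ι
  obtain ⟨m, hm⟩ := hl
  let φ : E → ℝ := fun v => max (l v) 0 + ∑ j, max (-(g j).linear v) 0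
  have hφ : Continuous φ := by
    have := l.continuous_of_finiteDimensional
    have (j : ι) : Continuous (g j).linear := (g j).linear.continuous_of_finiteDimensional
    fun_prop
  have hhom (t : ℝ) (ht : 0 ≤ t) (v : E) : φ (t • v) = t * φ v := by
    simp only [φ, map_smul, smul_eq_mul, mul_add, Finset.mul_sum, mul_max_of_nonneg _ _ ht,
      mul_neg, mul_zero]
  have hφpos (v : E) (hv : v ≠ 0) : 0 < φ v := by
    have hnonneg (j) : 0 ≤ max (-(g j).linear v) 0 := le_max_right _ _
    by_cases hcone : ∀ j, 0 ≤ (g j).linear v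
    · exact add_pos_of_pos_of_nonneg (lt_max_of_lt_left (hpos v hv hcone))
        (Finset.sum_nonneg fun j _ => hnonneg j)
    · obtain ⟨j, hj⟩ := not_forall.1 hcone
      exact add_pos_of_nonneg_of_pos (le_max_right _ _) <| Finset.sum_pos'
        (fun j _ => hnonneg j) ⟨j, Finset.mem_univ j, lt_max_of_lt_left (by linarith)⟩
  obtain ⟨c, hc, hcφ⟩ := exists_pos_mul_norm_le_of_pos_homogeneous hφ hhom hφpos
  refine ⟨c, hc, |m| + ∑ j, |g j 0|, fun x hx => ?_⟩
  have hsum : ∑ j, max (-(g j).linear x) 0 ≤ ∑ j, |g j 0| := by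
    refine Finset.sum_le_sum fun j _ => max_le ?_ (abs_nonneg _)
    have hj := hx j
    rw [← zero_add x, affineMap_add] at hj
    linarith [le_abs_self (g j 0)]
  have hmax : max (l x) 0 ≤ l x + |m| := by
    have := hm ⟨x, hx, rfl⟩
    exact max_le (by linarith [abs_nonneg m]) (by linarith [neg_abs_le m])
  linarith [hcφ x]

end Topology

section ArrangementIntegrand

variable {E ι : Type*} [AddCommGroup E] [Module ℝ E] [Fintype ι]

/-- The integrand `e^{-λ f₀} ∏ j, |f j|^{α j} / ∏ j ∈ V, f j` of the exponential integrals attached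
to the arrangement `f`, without the constant determinant factor. -/
def arrangementIntegrand (f : ι → E →ᵃ[ℝ] ℝ) (f0 : E →ₗ[ℝ] ℝ) (α : ι → ℝ) (lam : ℂ) (V : Finset ι)
    (x : E) : ℂ :=
  Complex.exp (-(lam * Complex.ofReal (f0 x))) *
    Complex.ofReal ((∏ j, |f j x| ^ α j) * (∏ j ∈ V, f j x)⁻¹)

lemma setIntegral_const_mul_arrangementIntegrand [MeasurableSpace E] (f : ι → E →ᵃ[ℝ] ℝ)
    (f0 : E →ₗ[ℝ] ℝ) (α : ι → ℝ) (lam : ℂ) (V : Finset ι) (d : ℝ) (μ : Measure E) (Δ : Set E) :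
    ∫ x in Δ, Complex.exp (-(lam * Complex.ofReal (f0 x))) *
        Complex.ofReal ((∏ j, |f j x| ^ α j) * d * (∏ j ∈ V, f j x)⁻¹) ∂μ =
      Complex.ofReal d * ∫ x in Δ, arrangementIntegrand f f0 α lam V x ∂μ := by
  simp only [← integral_const_mul, arrangementIntegrand]
  congr with x
  push_cast
  ring

variable {f : ι → E →ᵃ[ℝ] ℝ} {f0 : E →ₗ[ℝ] ℝ} {α : ι → ℝ} {lam : ℂ} {U : Finset ι} {x : E}

lemma arrangementIntegrand_eq_zero (hα : ∀ j, 0 < α j) (hx : ∃ j, f j x = 0) :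
    arrangementIntegrand f f0 α lam U x = 0 := by
  obtain ⟨j, hj⟩ := hx
  have hprod : ∏ j, |f j x| ^ α j = 0 := Finset.prod_eq_zero (Finset.mem_univ j) (by
    rw [hj, abs_zero, Real.zero_rpow (hα j).ne'])
  rw [arrangementIntegrand, hprod, zero_mul, Complex.ofReal_zero, mul_zero]

lemma arrangementIntegrand_insert [DecidableEq ι] {r : ι} (hr : r ∉ U) :
    arrangementIntegrand f f0 α lam (insert r U) x =
      arrangementIntegrand f f0 α lam U x * Complex.ofReal (f r x)⁻¹ := by
  rw [arrangementIntegrand, arrangementIntegrand, Finset.prod_insert hr, mul_inv, mul_assoc,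
    ← Complex.ofReal_mul, mul_right_comm, mul_assoc]

lemma norm_arrangementIntegrand [DecidableEq ι] (hx : ∀ j, f j x ≠ 0) :
    ‖arrangementIntegrand f f0 α lam U x‖ =
      Real.exp (-(lam.re * f0 x)) * ∏ j, |f j x| ^ (if j ∈ U then α j - 1 else α j) := by
  have hpow : (∏ j, |f j x| ^ α j) * (∏ j ∈ U, |f j x|)⁻¹ =
      ∏ j, |f j x| ^ (if j ∈ U then α j - 1 else α j) := by
    rw [← Finset.prod_inv_distrib, ← Fintype.prod_ite_mem U, ← Finset.prod_mul_distrib]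
    refine Finset.prod_congr rfl fun j _ => ?_
    split_ifs
    · rw [Real.rpow_sub_one (abs_ne_zero.2 (hx j)), div_eq_mul_inv]
    · exact mul_one _
  rw [arrangementIntegrand, norm_mul, Complex.norm_exp, Complex.norm_real, norm_mul, norm_inv,
    norm_prod, norm_prod, ← hpow]
  simp [Real.abs_rpow_of_nonneg, abs_nonneg]

end ArrangementIntegrand

section Stokes

lemma hasDerivAt_prod_abs_rpow {ι : Type*} [Fintype ι] {u : ι → ℝ → ℝ} {u' : ι → ℝ} {t : ℝ}
    (α : ι → ℝ) (hu : ∀ j, HasDerivAt (u j) (u' j) t) (hne : ∀ j, u j t ≠ 0) :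
    HasDerivAt (fun s => ∏ j, |u j s| ^ α j)
      ((∏ j, |u j t| ^ α j) * ∑ j, α j * (u' j / u j t)) t := by
  have hexp (s : ℝ) (hs : ∀ j, u j s ≠ 0) :
      ∏ j, |u j s| ^ α j = Real.exp (∑ j, α j * Real.log (u j s)) := by
    rw [Real.exp_sum]
    exact Finset.prod_congr rfl fun j _ => by
      rw [Real.rpow_def_of_pos (abs_pos.2 (hs j)), Real.log_abs, mul_comm]
  have hlog : HasDerivAt (fun s => ∑ j, α j * Real.log (u j s)) (∑ j, α j * (u' j / u j t)) t :=
    HasDerivAt.fun_sum fun j _ => ((hu j).log (hne j)).const_mul (α j)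
  rw [hexp t hne]
  refine hlog.exp.congr_of_eventuallyEq ?_
  have hev : ∀ᶠ s in nhds t, ∀ j, u j s ≠ 0 :=
    eventually_all.2 fun j => (hu j).continuousAt.eventually_ne (hne j)
  exact hev.mono hexp

variable {E ι : Type*} [NormedAddCommGroup E] [NormedSpace ℝ E] [Fintype ι]
  {f : ι → E →ᵃ[ℝ] ℝ} {f0 : E →ₗ[ℝ] ℝ} {α : ι → ℝ} {lam : ℂ} {U : Finset ι} {x e : E}

lemma hasLineDerivAt_arrangementIntegrand [DecidableEq ι]
    (he : ∀ i ∈ U, (f i).linear e = 0) (hx : ∀ j, f j x ≠ 0) :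
    HasLineDerivAt ℝ (arrangementIntegrand f f0 α lam U)
      (-(lam * Complex.ofReal (f0 e) * arrangementIntegrand f f0 α lam U x) +
        ∑ r ∈ Uᶜ, Complex.ofReal (α r * (f r).linear e) *
          arrangementIntegrand f f0 α lam (insert r U) x) x e := by
  have hf0 : HasDerivAt (fun t : ℝ => f0 (x + t • e)) (f0 e) 0 := by
    simpa using ((hasDerivAt_id (0 : ℝ)).mul_const (f0 e)).const_add (f0 x)
  have hf (j : ι) : HasDerivAt (fun t : ℝ => f j (x + t • e)) ((f j).linear e) 0 := by
    simpa [affineMap_add] using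
      ((hasDerivAt_id (0 : ℝ)).mul_const ((f j).linear e)).const_add (f j x)
  have hprod := (hasDerivAt_prod_abs_rpow α hf (by simpa using hx)).mul_const (∏ j ∈ U, f j x)⁻¹
  have hmul := (hf0.ofReal_comp.const_mul lam).neg.cexp.mul hprod.ofReal_comp
  have hsum : ∑ r ∈ Uᶜ, Complex.ofReal (α r * (f r).linear e) *
      arrangementIntegrand f f0 α lam (insert r U) x =
      arrangementIntegrand f f0 α lam U x *
        Complex.ofReal (∑ j, α j * ((f j).linear e / f j x)) := by
    rw [Complex.ofReal_sum, Finset.mul_sum]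
    refine Finset.sum_subset_zero_on_sdiff (Finset.subset_univ _) (fun j hj => ?_) fun r hr => ?_
    · rw [he j (by simpa using hj), zero_div, mul_zero, Complex.ofReal_zero, mul_zero]
    · rw [arrangementIntegrand_insert (Finset.mem_compl.1 hr), div_eq_mul_inv]
      push_cast
      ring
  have hfun : (fun t : ℝ => arrangementIntegrand f f0 α lam U (x + t • e)) =
      fun t : ℝ => Complex.exp (-(lam * Complex.ofReal (f0 (x + t • e)))) *
        Complex.ofReal ((∏ j, |f j (x + t • e)| ^ α j) * (∏ j ∈ U, f j x)⁻¹) := by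
    funext t
    rw [arrangementIntegrand, prod_add_smul_of_linear_eq_zero he]
  rw [HasLineDerivAt, hfun, hsum]
  refine hmul.congr_deriv ?_
  simp only [Pi.neg_apply, arrangementIntegrand, zero_smul, add_zero]
  push_cast
  ring

variable [FiniteDimensional ℝ E]

lemma continuous_arrangementIntegrand_add_smul (hα : ∀ j, 0 < α j)
    (he : ∀ i ∈ U, (f i).linear e = 0) (x : E) :
    Continuous fun t : ℝ => arrangementIntegrand f f0 α lam U (x + t • e) := by
  have hf0 : Continuous f0 := f0.continuous_of_finiteDimensional
  have hf (j : ι) : Continuous (f j) := (f j).continuous_of_finiteDimensional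
  have hpow (j : ι) : Continuous fun t : ℝ => |f j (x + t • e)| ^ α j :=
    ((hf j).comp (by fun_prop)).abs.rpow_const fun _ => .inr (hα j).le
  simp only [arrangementIntegrand, prod_add_smul_of_linear_eq_zero he]
  fun_prop

lemma continuous_indicator_arrangementIntegrand_add_smul {Δ : Set E} (hα : ∀ j, 0 < α j)
    (hfr : ∀ x ∈ frontier Δ, ∃ j, f j x = 0) (he : ∀ i ∈ U, (f i).linear e = 0) (x : E) :
    Continuous fun t : ℝ => Δ.indicator (arrangementIntegrand f f0 α lam U) (x + t • e) := by
  have hline : Continuous fun t : ℝ => x + t • e := by fun_prop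
  exact (continuous_arrangementIntegrand_add_smul hα he x).indicator
    (s := (fun t : ℝ => x + t • e) ⁻¹' Δ) fun t ht =>
      arrangementIntegrand_eq_zero hα (hfr _ (hline.frontier_preimage_subset Δ ht))

variable [DecidableEq ι] [MeasurableSpace E] [BorelSpace E] {μ : Measure E} [SFinite μ]
  [μ.IsAddRightInvariant] {Δ : Set E}

/-- The integrand vanishes on the boundary of `Δ`, so its line derivative has integral zero. -/
theorem mul_setIntegral_arrangementIntegrand (hΔ : MeasurableSet Δ)
    (hne : ∀ x ∈ Δ, ∀ j, f j x ≠ 0) (hfr : ∀ x ∈ frontier Δ, ∃ j, f j x = 0)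
    (hα : ∀ j, 0 < α j) (he : ∀ i ∈ U, (f i).linear e = 0)
    (hint : IntegrableOn (arrangementIntegrand f f0 α lam U) Δ μ)
    (hint' : ∀ r ∈ Uᶜ, IntegrableOn (arrangementIntegrand f f0 α lam (insert r U)) Δ μ) :
    lam * Complex.ofReal (f0 e) * ∫ x in Δ, arrangementIntegrand f f0 α lam U x ∂μ =
      ∑ r ∈ Uᶜ, Complex.ofReal (α r * (f r).linear e) *
        ∫ x in Δ, arrangementIntegrand f f0 α lam (insert r U) x ∂μ := by
  let D (x : E) : ℂ := -(lam * Complex.ofReal (f0 e) * arrangementIntegrand f f0 α lam U x) +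
    ∑ r ∈ Uᶜ, Complex.ofReal (α r * (f r).linear e) *
      arrangementIntegrand f f0 α lam (insert r U) x
  have hleft := (hint.const_mul (lam * Complex.ofReal (f0 e))).neg
  have hterm (r : ι) (hr : r ∈ Uᶜ) := (hint' r hr).const_mul (Complex.ofReal (α r * (f r).linear e))
  have hD : IntegrableOn D Δ μ := hleft.add (integrable_finsetSum _ hterm)
  have hderiv (x : E) : ∃ S : Set ℝ, S.Countable ∧ ∀ t ∉ S,
      HasLineDerivAt ℝ (Δ.indicator (arrangementIntegrand f f0 α lam U))
        (Δ.indicator D (x + t • e)) (x + t • e) e := by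
    rcases countable_or_exists_forall_eq_zero f x e with hS | ⟨j, hj⟩
    · exact ⟨_, hS, fun t ht => hasLineDerivAt_indicator
        (hasLineDerivAt_arrangementIntegrand he (not_exists.1 ht)) fun h => ht (hfr _ h)⟩
    · have hzero (t : ℝ) (G : E → ℂ) : Δ.indicator G (x + t • e) = 0 :=
        indicator_of_notMem (fun h => hne _ h j (hj t)) G
      refine ⟨∅, countable_empty, fun t _ => ?_⟩
      simp only [HasLineDerivAt, add_assoc, ← add_smul, hzero]
      exact hasDerivAt_const _ _
  have hD0 : ∫ x in Δ, D x ∂μ = 0 := by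
    rw [← integral_indicator hΔ]
    exact integral_eq_zero_of_hasLineDerivAt ((integrable_indicator_iff hΔ).2 hint)
      ((integrable_indicator_iff hΔ).2 hD)
      (continuous_indicator_arrangementIntegrand_add_smul hα hfr he) hderiv
  rw [← neg_add_eq_zero, ← hD0]
  refine Eq.trans ?_ (integral_add hleft (integrable_finsetSum _ hterm)).symm
  simp only [Pi.neg_apply, integral_neg, integral_finsetSum _ hterm, integral_const_mul]

end Stokes

section Integrability

lemma integrable_abs_rpow_mul_exp_neg {β δ : ℝ} (hβ : -1 < β) (hδ : 0 < δ) :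
    Integrable fun y : ℝ => |y| ^ β * Real.exp (-(δ * |y|)) := by
  refine (integrable_fun_norm_addHaar volume
    (f := fun y : ℝ => y ^ β * Real.exp (-(δ * y)))).2 ?_
  simpa using integrableOn_rpow_mul_exp_neg_mul_rpow hβ one_pos hδ

lemma rpow_le_mul_exp {a η t : ℝ} (ha : 0 ≤ a) (hη : 0 < η) (ht : 0 ≤ t) :
    t ^ a ≤ (a / η) ^ a * Real.exp (η * t) := by
  rcases ha.eq_or_lt with rfl | ha
  · simpa using mul_nonneg hη.le ht
  have hlin : t ≤ a / η * Real.exp (η * t / a) := by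
    have hexp : η * t / a ≤ Real.exp (η * t / a) := by linarith [Real.add_one_le_exp (η * t / a)]
    calc t = a / η * (η * t / a) := by field_simp
      _ ≤ a / η * Real.exp (η * t / a) := by gcongr
  calc t ^ a ≤ (a / η * Real.exp (η * t / a)) ^ a := Real.rpow_le_rpow ht hlin ha.le
    _ = (a / η) ^ a * Real.exp (η * t) := by
      rw [Real.mul_rpow (by positivity) (Real.exp_pos _).le, ← Real.exp_mul,
        div_mul_cancel₀ _ ha.ne']

variable {E ι : Type*} [NormedAddCommGroup E] [NormedSpace ℝ E] [FiniteDimensional ℝ E]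
  {f : ι → E →ᵃ[ℝ] ℝ}

lemma bijective_pi_affineMap {X : Finset ι} (hX : X.card = Module.finrank ℝ E)
    (hzero : ∃! x, ∀ j ∈ X, f j x = 0) :
    Function.Bijective (AffineMap.pi fun j : X => f j) := by
  have hinj : Function.Injective (AffineMap.pi fun j : X => f j).linear :=
    (injective_iff_map_eq_zero _).2 fun v hv =>
      eq_zero_of_existsUnique_zero hzero fun j hj => congrFun hv ⟨j, hj⟩
  rw [← AffineMap.linear_bijective_iff]
  exact ⟨hinj, (LinearMap.injective_iff_surjective_of_finrank_eq_finrank (by simp [hX])).1 hinj⟩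

lemma exists_sum_abs_le_mul_one_add_norm [Fintype ι] (f : ι → E →ᵃ[ℝ] ℝ) :
    ∃ K > 0, ∀ x, ∑ j, |f j x| ≤ K * (1 + ‖x‖) := by
  refine ⟨1 + ∑ j, (|f j 0| + ‖(f j).linear.toContinuousLinearMap‖), by positivity, fun x => ?_⟩
  have hterm (j : ι) :
      |f j x| ≤ (|f j 0| + ‖(f j).linear.toContinuousLinearMap‖) * (1 + ‖x‖) := by
    have hlin : |(f j).linear x| ≤ ‖(f j).linear.toContinuousLinearMap‖ * ‖x‖ :=
      (f j).linear.toContinuousLinearMap.le_opNorm x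
    have hadd := abs_add_le (f j 0) ((f j).linear x)
    rw [← affineMap_add, zero_add] at hadd
    nlinarith [norm_nonneg x, abs_nonneg (f j 0),
      norm_nonneg (f j).linear.toContinuousLinearMap]
  calc ∑ j, |f j x|
      ≤ ∑ j, (|f j 0| + ‖(f j).linear.toContinuousLinearMap‖) * (1 + ‖x‖) :=
        Finset.sum_le_sum fun j _ => hterm j
    _ ≤ _ := by
        rw [← Finset.sum_mul]
        gcongr
        linarith

lemma exists_exp_neg_le_prod_exp_neg [Fintype ι] (f : ι → E →ᵃ[ℝ] ℝ) {l : E → ℝ} {Δ : Set E}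
    {c C ρ : ℝ} (hc : 0 < c) (hρ : 0 < ρ) (hl : ∀ x ∈ Δ, c * ‖x‖ - C ≤ l x) :
    ∃ δ > 0, ∃ M, ∀ x ∈ Δ, Real.exp (-(ρ * l x)) ≤ M * ∏ j, Real.exp (-(δ * |f j x|)) := by
  obtain ⟨K, hK, hfK⟩ := exists_sum_abs_le_mul_one_add_norm f
  refine ⟨ρ * c / K, by positivity, Real.exp (ρ * (c + C)), fun x hx => ?_⟩
  rw [← Real.exp_sum, ← Real.exp_add, Real.exp_le_exp, Finset.sum_neg_distrib, ← Finset.mul_sum]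
  have hsum : ρ * c / K * ∑ j, |f j x| ≤ ρ * c * (1 + ‖x‖) := by
    rw [div_mul_eq_mul_div, div_le_iff₀ hK]
    calc ρ * c * ∑ j, |f j x| ≤ ρ * c * (K * (1 + ‖x‖)) := by gcongr; exact hfK x
      _ = ρ * c * (1 + ‖x‖) * K := by ring
  linarith [mul_le_mul_of_nonneg_left (hl x hx) hρ.le]

variable [MeasurableSpace E] [BorelSpace E] {μ : Measure E} [μ.IsAddHaarMeasure]

lemma integrable_comp_affineMap_of_bijective {E' F : Type*} [NormedAddCommGroup E']
    [NormedSpace ℝ E'] [MeasurableSpace E'] [BorelSpace E']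
    [FiniteDimensional ℝ E'] [NormedAddCommGroup F] {ν : Measure E'} [ν.IsAddHaarMeasure]
    {g : E' → F} (hg : Integrable g ν) {A : E →ᵃ[ℝ] E'} (hA : Function.Bijective A) :
    Integrable (fun x => g (A x)) μ := by
  let L : E ≃L[ℝ] E' :=
    (LinearEquiv.ofBijective A.linear (A.linear_bijective_iff.2 hA)).toContinuousLinearEquiv
  have hL : (fun x => g (A x)) = (fun y => g (y + A 0)) ∘ L := by
    funext x
    have hAx := affineMap_add A 0 x
    rw [zero_add, add_comm] at hAx
    exact congrArg g hAx
  have : (μ.map L).IsAddHaarMeasure := L.isAddHaarMeasure_map μ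
  rw [hL]
  refine Integrable.comp_measurable ?_ L.continuous.measurable
  rw [Measure.isAddLeftInvariant_eq_smul (μ.map L) ν]
  exact (hg.comp_add_right (A 0)).smul_measure ENNReal.coe_ne_top

/-- The forms `f j`, `j ∈ X`, are affine coordinates, in which the product over `X` separates;
the other factors are bounded. -/
lemma integrable_prod_abs_rpow_mul_exp_neg [Fintype ι] {X : Finset ι}
    (hX : X.card = Module.finrank ℝ E) (hzero : ∃! x, ∀ j ∈ X, f j x = 0) {β : ι → ℝ}
    (hβX : ∀ j ∈ X, -1 < β j) (hβ : ∀ j ∉ X, 0 ≤ β j) {δ : ℝ} (hδ : 0 < δ) :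
    Integrable (fun x => ∏ j, (|f j x| ^ β j * Real.exp (-(δ * |f j x|)))) μ := by
  classical
  have hsep : Integrable
      fun y : X → ℝ => ∏ j, (|y j| ^ β j * Real.exp (-(δ * |y j|))) :=
    Integrable.fintype_prod (f := fun (j : X) (t : ℝ) => |t| ^ β j * Real.exp (-(δ * |t|)))
      fun j => integrable_abs_rpow_mul_exp_neg (hβX j j.2) hδ
  have hcoord : Integrable
      (fun x => ∏ j ∈ X, (|f j x| ^ β j * Real.exp (-(δ * |f j x|)))) μ := by
    simp only [← Finset.prod_coe_sort X]
    have hcomp :=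
      integrable_comp_affineMap_of_bijective (μ := μ) hsep (bijective_pi_affineMap hX hzero)
    exact hcomp
  have hmeas (j : ι) : Measurable (f j) := (f j).continuous_of_finiteDimensional.measurable
  have hbound (j : ι) (hj : j ∈ Xᶜ) (x : E) :
      ‖|f j x| ^ β j * Real.exp (-(δ * |f j x|))‖ ≤ (β j / δ) ^ β j := by
    rw [Real.norm_of_nonneg (by positivity), Real.exp_neg, ← div_eq_mul_inv,
      div_le_iff₀ (Real.exp_pos _)]
    exact rpow_le_mul_exp (hβ j (Finset.mem_compl.1 hj)) hδ (abs_nonneg _)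
  simp only [← Finset.prod_compl_mul_prod X]
  refine hcoord.bdd_mul (c := ∏ j ∈ Xᶜ, (β j / δ) ^ β j)
    (Measurable.aestronglyMeasurable (by fun_prop)) (.of_forall fun x => ?_)
  rw [norm_prod]
  exact Finset.prod_le_prod (fun _ _ => norm_nonneg _) fun j hj => hbound j hj x

variable [Fintype ι] {f0 : E →ₗ[ℝ] ℝ} {α : ι → ℝ} {lam : ℂ} {V X : Finset ι} {Δ : Set E} {c C : ℝ}

lemma measurable_arrangementIntegrand : Measurable (arrangementIntegrand f f0 α lam V) := by
  have hf (j : ι) : Measurable (f j) := (f j).continuous_of_finiteDimensional.measurable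
  have hf0 : Measurable f0 := f0.continuous_of_finiteDimensional.measurable
  unfold arrangementIntegrand
  fun_prop

lemma integrableOn_arrangementIntegrand (hΔ : MeasurableSet Δ) (hne : ∀ x ∈ Δ, ∀ j, f j x ≠ 0)
    (hX : X.card = Module.finrank ℝ E) (hzero : ∃! x, ∀ j ∈ X, f j x = 0) (hVX : V ⊆ X)
    (hα : ∀ j, 0 < α j) (hlam : 0 < lam.re) (hc : 0 < c)
    (hgrowth : ∀ x ∈ Δ, c * ‖x‖ - C ≤ f0 x) :
    IntegrableOn (arrangementIntegrand f f0 α lam V) Δ μ := by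
  classical
  obtain ⟨δ, hδ, M, hM⟩ := exists_exp_neg_le_prod_exp_neg f hc hlam hgrowth
  let β (j : ι) : ℝ := if j ∈ V then α j - 1 else α j
  have hβX (j : ι) (_ : j ∈ X) : -1 < β j := by
    have := hα j
    simp only [β]
    split_ifs <;> linarith
  have hβ (j : ι) (hj : j ∉ X) : 0 ≤ β j := by
    simpa only [β, if_neg fun h => hj (hVX h)] using (hα j).le
  refine ((integrable_prod_abs_rpow_mul_exp_neg hX hzero hβX hβ hδ).const_mul M).integrableOn.mono'
    measurable_arrangementIntegrand.aestronglyMeasurable ?_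
  refine ae_restrict_of_forall_mem hΔ fun x hx => ?_
  rw [norm_arrangementIntegrand (hne x hx), Finset.prod_mul_distrib, mul_left_comm, mul_comm]
  exact mul_le_mul_of_nonneg_left (hM x hx) (by positivity)

end Integrability

section Determinant

open Matrix

variable {ι n R : Type*} [Fintype n] [DecidableEq n] [CommRing R]

lemma det_updateRow_of_mulVec_eq_single {A : Matrix n n R} {e : n → R} {i₀ : n}
    (h : A *ᵥ e = Pi.single i₀ 1) (b : n → R) :
    (A.updateRow i₀ b).det = b ⬝ᵥ e * A.det := by
  have hadj : A.adjugate.col i₀ = A.det • e := by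
    rw [← mulVec_single_one, ← h, mulVec_mulVec, adjugate_mul, smul_mulVec, one_mulVec]
  rw [← cramer_transpose_apply, cramer_eq_adjugate_mulVec, ← adjugate_transpose, mulVec_transpose]
  change b ⬝ᵥ A.adjugate.col i₀ = _
  rw [hadj, dotProduct_smul, smul_eq_mul, mul_comm]

/-- The matrix whose rows are the linear forms `L i`, in the standard coordinates. -/
def formMatrix {m : Type*} (L : m → (n → R) →ₗ[R] R) : Matrix m n R :=
  Matrix.of fun i c => L i (Pi.single c 1)

lemma apply_single_dotProduct (l : (n → R) →ₗ[R] R) (e : n → R) :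
    (fun c => l (Pi.single c 1)) ⬝ᵥ e = l e := by
  conv_rhs => rw [pi_eq_sum_univ' e, map_sum]
  simp [dotProduct, mul_comm]

lemma det_formMatrix_update {L : n → (n → R) →ₗ[R] R} {i₀ : n} {e : n → R} (hi₀ : L i₀ e = 1)
    (he : ∀ i ≠ i₀, L i e = 0) (l : (n → R) →ₗ[R] R) :
    (formMatrix (Function.update L i₀ l)).det = l e * (formMatrix L).det := by
  have hmulVec : formMatrix L *ᵥ e = Pi.single i₀ 1 := by
    funext i
    refine (apply_single_dotProduct (L i) e).trans ?_
    rcases eq_or_ne i i₀ with rfl | hi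
    · rw [hi₀, Pi.single_eq_same]
    · rw [he i hi, Pi.single_eq_of_ne hi]
  have hrow : formMatrix (Function.update L i₀ l) =
      (formMatrix L).updateRow i₀ fun c => l (Pi.single c 1) := by
    ext i c
    rcases eq_or_ne i i₀ with rfl | hi
    · simp [formMatrix]
    · simp [formMatrix, hi]
  rw [hrow, det_updateRow_of_mulVec_eq_single hmulVec, apply_single_dotProduct]

variable [LinearOrder R] [IsStrictOrderedRing R]

lemma abs_det_formMatrix_comp_eq {m : ι → (n → R) →ₗ[R] R} {a b : n → ι}
    (ha : Function.Injective a) (hab : range a ⊆ range b) :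
    |(formMatrix (m ∘ a)).det| = |(formMatrix (m ∘ b)).det| := by
  obtain ⟨σ, rfl⟩ := range_subset_range_iff_exists_comp.1 hab
  exact abs_det_submatrix_equiv_equiv
    (Equiv.ofBijective σ (Finite.injective_iff_bijective.1 ha.of_comp)) (.refl n)
    (formMatrix (m ∘ b))

/-- Both matrices contain the rows `m j`, `j ∈ U`; the last row `l₀` of the second one becomes `m r`
in the first one, up to the order of the rows. -/
lemma abs_det_formMatrix_insert {k : ℕ} [LinearOrder ι] {m : ι → (Fin k → R) →ₗ[R] R}
    {l₀ : (Fin k → R) →ₗ[R] R} {U : Finset ι} {r : ι} (hU : U.card = k - 1)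
    (hr : (insert r U).card = k) {e : Fin k → R} (he : ∀ j ∈ U, m j e = 0) (he₀ : l₀ e = 1) :
    |(formMatrix (m ∘ (insert r U).orderEmbOfFin hr)).det| =
      |m r e| * |(formMatrix fun i : Fin k =>
        if h : (i : ℕ) < k - 1 then m (U.orderEmbOfFin hU ⟨i, h⟩) else l₀).det| := by
  have hk : k - 1 < k := by
    rw [← hr]
    exact Nat.sub_one_lt (Finset.card_ne_zero_of_mem (Finset.mem_insert_self r U))
  let i₀ : Fin k := ⟨k - 1, hk⟩
  let b : Fin k → ι := fun i => if h : (i : ℕ) < k - 1 then U.orderEmbOfFin hU ⟨i, h⟩ else r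
  let L : Fin k → (Fin k → R) →ₗ[R] R :=
    fun i => if h : (i : ℕ) < k - 1 then m (U.orderEmbOfFin hU ⟨i, h⟩) else l₀
  have hlt (i : Fin k) (hi : i ≠ i₀) : (i : ℕ) < k - 1 := by
    have := Fin.val_ne_of_ne hi
    simp only [i₀] at this
    omega
  have hrange : range ((insert r U).orderEmbOfFin hr) ⊆ range b := by
    rw [Finset.range_orderEmbOfFin, Finset.coe_insert, insert_subset_iff,
      ← Finset.range_orderEmbOfFin U hU, range_subset_iff]
    exact ⟨⟨i₀, dif_neg (lt_irrefl _)⟩, fun i => ⟨⟨i, i.2.trans hk⟩, dif_pos i.2⟩⟩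
  have hL : Function.update L i₀ (m r) = m ∘ b := by
    funext i
    rcases eq_or_ne i i₀ with rfl | hi
    · simp [b, i₀]
    · simp [L, b, hi, hlt i hi]
  have hLe (i : Fin k) (hi : i ≠ i₀) : L i e = 0 := by
    simpa only [L, dif_pos (hlt i hi)] using he _ (Finset.orderEmbOfFin_mem U hU _)
  have hL₀ : L i₀ e = 1 := by simpa [L, i₀] using he₀
  rw [abs_det_formMatrix_comp_eq (RelEmbedding.injective _) hrange, ← hL,
    det_formMatrix_update hL₀ hLe, abs_mul]

end Determinant

section ArrangementDomain

variable {f : Fin N → (Fin k → ℝ) →ᵃ[ℝ] ℝ} {f0 : (Fin k → ℝ) →ₗ[ℝ] ℝ} {Δ : Set (Fin k → ℝ)}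

lemma exists_eq_openPolyhedron_of_isDomain (hΔ : IsDomain f Δ) :
    ∃ p, (∀ j, f j p ≠ 0) ∧ Δ = openPolyhedron fun j => f j p • f j := by
  obtain ⟨p, hp, rfl⟩ := hΔ
  exact ⟨p, hp, connectedComponentIn_compl_hyperplanes hp⟩

lemma isOpen_of_isDomain (hΔ : IsDomain f Δ) : IsOpen Δ := by
  obtain ⟨p, -, rfl⟩ := exists_eq_openPolyhedron_of_isDomain hΔ
  exact isOpen_openPolyhedron _

lemma ne_zero_of_mem_of_isDomain (hΔ : IsDomain f Δ) {x : Fin k → ℝ} (hx : x ∈ Δ) (j : Fin N) :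
    f j x ≠ 0 := by
  obtain ⟨p, -, rfl⟩ := hΔ
  exact connectedComponentIn_subset _ _ hx j

lemma exists_eq_zero_of_mem_frontier_of_isDomain (hΔ : IsDomain f Δ) {x : Fin k → ℝ}
    (hx : x ∈ frontier Δ) : ∃ j, f j x = 0 := by
  obtain ⟨p, hp, rfl⟩ := exists_eq_openPolyhedron_of_isDomain hΔ
  obtain ⟨j, hj⟩ := exists_eq_zero_of_mem_frontier_openPolyhedron hx
  exact ⟨j, (mul_eq_zero.1 hj).resolve_left (hp j)⟩

/-- At most `k - 1` of the hyperplanes are parallel to `v`, and `w` directs a line of the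
arrangement that is parallel to all of them. -/
lemma exists_apply_ne_zero_of_parallel (hkN : k ≤ N)
    (hvertex : ∀ S : Finset (Fin N), S.card = k → ∃! x, ∀ j ∈ S, f j x = 0)
    (hline : ∀ U : Finset (Fin N), U.card = k - 1 →
      ∃ x y, (∀ j ∈ U, f j x = 0) ∧ (∀ j ∈ U, f j y = 0) ∧ f0 x ≠ f0 y)
    {v : Fin k → ℝ} (hv : v ≠ 0) :
    ∃ w, (∀ j, (f j).linear v = 0 → (f j).linear w = 0) ∧ f0 w ≠ 0 := by
  let Z : Finset (Fin N) := {j | (f j).linear v = 0}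
  have hZ : Z.card < k := by
    by_contra! h
    obtain ⟨S, hSZ, hS⟩ := Finset.exists_subset_card_eq h
    exact hv (eq_zero_of_existsUnique_zero (hvertex S hS) fun j hj => by simpa [Z] using hSZ hj)
  obtain ⟨V, hZV, hV⟩ := Finset.exists_superset_card_eq (Nat.le_sub_one_of_lt hZ)
    (by rw [Fintype.card_fin]; omega)
  obtain ⟨x, y, hx, hy, hxy⟩ := hline V hV
  refine ⟨y - x, fun j hj => ?_, by simpa [sub_eq_zero] using hxy.symm⟩
  have hjV : j ∈ V := hZV (by simpa [Z] using hj)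
  have hadd := affineMap_add (f j) x (y - x)
  rwa [add_sub_cancel, hx j hjV, hy j hjV, zero_add, eq_comm] at hadd

lemma exists_norm_growth_of_memDplus (hkN : k ≤ N)
    (hvertex : ∀ S : Finset (Fin N), S.card = k → ∃! x, ∀ j ∈ S, f j x = 0)
    (hline : ∀ U : Finset (Fin N), U.card = k - 1 →
      ∃ x y, (∀ j ∈ U, f j x = 0) ∧ (∀ j ∈ U, f j y = 0) ∧ f0 x ≠ f0 y)
    (hΔ : MemDplus f f0 Δ) : ∃ c > 0, ∃ C, ∀ x ∈ Δ, c * ‖x‖ - C ≤ f0 x := by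
  obtain ⟨p, hp, rfl⟩ := exists_eq_openPolyhedron_of_isDomain hΔ.1
  refine exists_norm_growth_openPolyhedron hΔ.2 fun v hv hcone => ?_
  obtain ⟨w, hw, hw0⟩ := exists_apply_ne_zero_of_parallel hkN hvertex hline hv
  refine pos_of_nonneg_on_cone (m := fun j => (f j p • f j).linear)
    (fun u => nonneg_of_bddBelow_openPolyhedron ⟨p, fun j => mul_self_pos.2 (hp j)⟩ hΔ.2)
    hcone (fun j hj => ?_) hw0
  have hj' : (f j).linear v = 0 := (mul_eq_zero.1 hj).resolve_left (hp j)
  exact mul_eq_zero_of_right _ (hw j hj')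

variable {α : Fin N → ℝ} {lam : ℂ} {U : Finset (Fin N)} {e : Fin k → ℝ}

theorem mul_setIntegral_arrangementIntegrand_of_memDplus (hkN : k ≤ N)
    (hvertex : ∀ S : Finset (Fin N), S.card = k → ∃! x, ∀ j ∈ S, f j x = 0)
    (hline : ∀ U : Finset (Fin N), U.card = k - 1 →
      ∃ x y, (∀ j ∈ U, f j x = 0) ∧ (∀ j ∈ U, f j y = 0) ∧ f0 x ≠ f0 y)
    (hΔ : MemDplus f f0 Δ) (hα : ∀ j, 0 < α j) (hlam : 0 < lam.re)
    (hU : U.card + 1 = k) (he : ∀ i ∈ U, (f i).linear e = 0) (he0 : f0 e = 1) :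
    lam * ∫ x in Δ, arrangementIntegrand f f0 α lam U x =
      ∑ r ∈ Uᶜ, Complex.ofReal (α r * (f r).linear e) *
        ∫ x in Δ, arrangementIntegrand f f0 α lam (insert r U) x := by
  obtain ⟨c, hc, C, hgrowth⟩ := exists_norm_growth_of_memDplus hkN hvertex hline hΔ
  have hcard (r : Fin N) (hr : r ∈ Uᶜ) : (insert r U).card = k := by
    rw [Finset.card_insert_of_notMem (Finset.mem_compl.1 hr), hU]
  have hint (r : Fin N) (hr : r ∈ Uᶜ) (V : Finset (Fin N)) (hV : V ⊆ insert r U) :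
      IntegrableOn (arrangementIntegrand f f0 α lam V) Δ :=
    integrableOn_arrangementIntegrand (isOpen_of_isDomain hΔ.1).measurableSet
      (fun _ => ne_zero_of_mem_of_isDomain hΔ.1) (by simp [hcard r hr])
      (hvertex _ (hcard r hr)) hV hα hlam hc hgrowth
  obtain ⟨r₀, hr₀⟩ : Uᶜ.Nonempty := by
    rw [← Finset.card_pos, Finset.card_compl, Fintype.card_fin]
    omega
  simpa only [he0, Complex.ofReal_one, mul_one] using
    mul_setIntegral_arrangementIntegrand (isOpen_of_isDomain hΔ.1).measurableSet
      (fun _ => ne_zero_of_mem_of_isDomain hΔ.1)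
      (fun _ => exists_eq_zero_of_mem_frontier_of_isDomain hΔ.1) hα he
      (hint r₀ hr₀ U (Finset.subset_insert r₀ U)) fun r hr => hint r hr _ subset_rfl

end ArrangementDomain

lemma real_sign_mul_abs (a : ℝ) : Real.sign a * |a| = a := by
  rcases lt_trichotomy a 0 with h | rfl | h
  · rw [Real.sign_of_neg h, abs_of_neg h, neg_one_mul, neg_neg]
  · simp
  · rw [Real.sign_of_pos h, abs_of_pos h, one_mul]

theorem stmt_18_general {k N : ℕ} (hk : 1 ≤ k) (hkN : k ≤ N)
    (f : Fin N → ((Fin k → ℝ) →ᵃ[ℝ] ℝ))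
    (hvertex : ∀ S : Finset (Fin N), S.card = k → ∃! x, ∀ j ∈ S, f j x = 0)
    (f0 : (Fin k → ℝ) →ₗ[ℝ] ℝ)
    (hline : ∀ U : Finset (Fin N), U.card = k - 1 →
      ∃ x y, (∀ j ∈ U, f j x = 0) ∧ (∀ j ∈ U, f j y = 0) ∧ f0 x ≠ f0 y)
    (α : Fin N → ℝ) (hα : ∀ j, 0 < α j)
    (Δ : Set (Fin k → ℝ)) (hΔ : MemDplus f f0 Δ)
    (U : Finset (Fin N)) (hU : U.card = k - 1)
    (eU : Fin k → ℝ)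
    (heU : (∀ i ∈ U, (f i).linear eU = 0) ∧ f0 eU = 1)
    (lam : ℂ) (hlam : 0 < lam.re)
    (dAbs0 : ℝ)
    (hd0 : dAbs0 = |(Matrix.of fun i c : Fin k =>
      (if h : (i : ℕ) < k - 1 then (f ((U.orderIsoOfFin hU ⟨i, h⟩ : U) : Fin N)).linear
        else f0) (Pi.single c 1)).det|)
    (dAbs : Fin N → ℝ)
    (hd : ∀ r : Fin N, r ∉ U → ∀ h : (insert r U).card = k,
      dAbs r = |(Matrix.of fun i c : Fin k =>
        (f (((insert r U).orderIsoOfFin h i : (insert r U : Finset (Fin N))) :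
          Fin N)).linear (Pi.single c 1)).det|) :
    lam * ∫ x in Δ, Complex.exp (-(lam * Complex.ofReal (f0 x))) *
        Complex.ofReal ((∏ j, |f j x| ^ α j) * dAbs0 * (∏ j ∈ U, f j x)⁻¹) =
    ∑ r ∈ Uᶜ, Complex.ofReal (Real.sign ((f r).linear eU) * α r) *
      ∫ x in Δ, Complex.exp (-(lam * Complex.ofReal (f0 x))) *
        Complex.ofReal ((∏ j, |f j x| ^ α j) * dAbs r * (∏ j ∈ insert r U, f j x)⁻¹) := by
  have hU' : U.card + 1 = k := by omega
  have hdet (r : Fin N) (hr : r ∉ U) : dAbs r = |(f r).linear eU| * dAbs0 := by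
    have hcard : (insert r U).card = k := by rw [Finset.card_insert_of_notMem hr, hU']
    rw [hd r hr hcard, hd0]
    exact abs_det_formMatrix_insert (m := fun j => (f j).linear) hU hcard heU.1 heU.2
  simp only [setIntegral_const_mul_arrangementIntegrand f f0]
  rw [mul_left_comm, mul_setIntegral_arrangementIntegrand_of_memDplus hkN hvertex hline hΔ hα hlam
    hU' heU.1 heU.2, Finset.mul_sum]
  refine Finset.sum_congr rfl fun r hr => ?_
  rw [hdet r (Finset.mem_compl.1 hr), ← mul_assoc, ← mul_assoc, ← Complex.ofReal_mul,
    ← Complex.ofReal_mul]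
  congr 2
  linear_combination -(dAbs0 * α r) * real_sign_mul_abs ((f r).linear eU)

/-- the Stokes/cohomological relation
`λ ∫_Δ e^{-λ f0} (∏ |f j| ^ α j) |det(f0, l_{j_1},…,l_{j_{k-1}})| (∏_{j ∈ U} f j)⁻¹ =
∑_{r ∉ U} sgn(l r (e_U)) α r I_{Δ, U ∪ {r}}(λ)`. -/
theorem stmt_18 {k N : ℕ} (hk : 1 ≤ k) (hkN : k ≤ N)
    (f : Fin N → ((Fin k → ℝ) →ᵃ[ℝ] ℝ)) (hf : Generic f)
    (f0 : (Fin k → ℝ) →ₗ[ℝ] ℝ) (hf0 : GenericLin f f0)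
    (α : Fin N → ℝ) (hα : ∀ j, 0 < α j)
    (Δ : Set (Fin k → ℝ)) (hΔ : MemDplus f f0 Δ)
    (U : Finset (Fin N)) (hU : U.card = k - 1)
    (eU : Fin k → ℝ)
    (heU : (∀ i ∈ U, (f i).linear eU = 0) ∧ f0 eU = 1)
    (lam : ℂ) (hlam : 0 < lam.re)
    (dAbs0 : ℝ)
    (hd0 : dAbs0 = |(Matrix.of fun i c : Fin k =>
      (if h : (i : ℕ) < k - 1 then (f ((U.orderIsoOfFin hU ⟨i, h⟩ : U) : Fin N)).linear
        else f0) (Pi.single c 1)).det|)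
    (dAbs : Fin N → ℝ)
    (hd : ∀ r : Fin N, r ∉ U → ∀ h : (insert r U).card = k,
      dAbs r = |(Matrix.of fun i c : Fin k =>
        (f (((insert r U).orderIsoOfFin h i : (insert r U : Finset (Fin N))) :
          Fin N)).linear (Pi.single c 1)).det|) :
    lam * ∫ x in Δ, Complex.exp (-(lam * Complex.ofReal (f0 x))) *
        Complex.ofReal ((∏ j, |f j x| ^ α j) * dAbs0 * (∏ j ∈ U, f j x)⁻¹) =
    ∑ r ∈ Uᶜ, Complex.ofReal (Real.sign ((f r).linear eU) * α r) *
      ∫ x in Δ, Complex.exp (-(lam * Complex.ofReal (f0 x))) *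
        Complex.ofReal ((∏ j, |f j x| ^ α j) * dAbs r * (∏ j ∈ insert r U, f j x)⁻¹) :=
  stmt_18_general hk hkN f hf.2.1 f0 hf0.2 α hα Δ hΔ U hU eU heU lam hlam dAbs0 hd0 dAbs hd

end HypArr
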